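/- Let Δ be a simplicial complex over a field k and suppose A ⊆ Δ is an excellent set of faces, i.e., A is an independent set of faces and every facet of Δ contains some (necessarily unique) member of A. If Δ satisfies Serre's condition (S_ℓ) with ℓ ≥ 2, then Δ_A = Δ − {σ ∈ Δ : σ ⊇ τ for some τ ∈ A} satisfies (S_{ℓ−1}). -/

import Mathlib

open Finset

/-- An abstract simplicial complex on vertex type `V`, given by a finite, downward closed
family of finite subsets of `V` (its faces). -/
structure SComplex (V : Type) [DecidableEq V] where
  faces : Finset (Finset V)
  down_closed : ∀ ⦃s t : Finset V⦄, s ∈ faces → t ⊆ s → t ∈ faces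

namespace SComplex

variable {V : Type} [DecidableEq V]

/-- `K.rank = d = dim k[Δ] = dim Δ + 1` is the maximal cardinality of a face of `K`. -/
def rank (K : SComplex V) : ℕ := K.faces.sup Finset.card

/-- `F` is a facet (maximal face) of `K`. -/
def IsFacet (K : SComplex V) (F : Finset V) : Prop :=
  F ∈ K.faces ∧ ∀ G ∈ K.faces, F ⊆ G → F = G

/-- `K` is pure: all facets have the maximal cardinality `K.rank`. -/
def Pure (K : SComplex V) : Prop := ∀ F : Finset V, K.IsFacet F → F.card = K.rank

/-- The link `lk_K(T) = {G ∈ K | T ∪ G ∈ K, T ∩ G = ∅}`. -/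
def link (K : SComplex V) (T : Finset V) : SComplex V where
  faces := K.faces.filter fun G => Disjoint T G ∧ T ∪ G ∈ K.faces
  down_closed := by
    intro s t hs hts
    simp only [Finset.mem_filter] at hs ⊢
    exact ⟨K.down_closed hs.1 hts, hs.2.1.mono_right hts,
      K.down_closed hs.2.2 (Finset.union_subset_union_right hts)⟩

/-- The anti-star `ast_K(T) = {G ∈ K | T ∩ G = ∅}`. -/
def antistar (K : SComplex V) (T : Finset V) : SComplex V where
  faces := K.faces.filter fun G => Disjoint T G
  down_closed := by
    intro s t hs hts
    simp only [Finset.mem_filter] at hs ⊢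
    exact ⟨K.down_closed hs.1 hts, hs.2.mono_right hts⟩

/-- The induced subcomplex of `K` on a set `W` of vertices. -/
def restrict (K : SComplex V) (W : Finset V) : SComplex V where
  faces := K.faces.filter fun G => G ⊆ W
  down_closed := by
    intro s t hs hts
    simp only [Finset.mem_filter] at hs ⊢
    exact ⟨K.down_closed hs.1 hts, hts.trans hs.2⟩

/-- The subcomplex of faces of cardinality at most `m`; as cardinality = dimension + 1, this is
the `(m-1)`-skeleton `Δ^{(m-1)}`. -/
def skelCard (K : SComplex V) (m : ℕ) : SComplex V where
  faces := K.faces.filter fun G => G.card ≤ m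
  down_closed := by
    intro s t hs hts
    simp only [Finset.mem_filter] at hs ⊢
    exact ⟨K.down_closed hs.1 hts, le_trans (Finset.card_le_card hts) hs.2⟩

/-- `K.trunc j` is `[Δ]_{>j}`, the order complex of the poset of faces of `K` of cardinality
(equivalently, of height in the face poset) `> j`: its faces are the chains of such faces.
For `j = 0` this is the barycentric subdivision of `K`. -/
def trunc (K : SComplex V) (j : ℕ) : SComplex (Finset V) where
  faces := K.faces.powerset.filter fun C =>
    (∀ s ∈ C, j < s.card) ∧ ∀ s ∈ C, ∀ t ∈ C, s ⊆ t ∨ t ⊆ s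
  down_closed := by
    intro s t hs hts
    simp only [Finset.mem_powerset, Finset.mem_filter] at hs ⊢
    exact ⟨hts.trans hs.1, fun a ha => hs.2.1 a (hts ha),
      fun a ha b hb => hs.2.2 a (hts ha) b (hts hb)⟩

/-- `Δ_A`: the complex obtained from `K` by deleting all faces containing a member of `A`. -/
def deleteAbove (K : SComplex V) (A : Finset (Finset V)) : SComplex V where
  faces := K.faces.filter fun s => ∀ τ ∈ A, ¬ τ ⊆ s
  down_closed := by
    intro s t hs hts
    simp only [Finset.mem_filter] at hs ⊢
    exact ⟨K.down_closed hs.1 hts, fun τ hτ hsub => hs.2 τ hτ (hsub.trans hts)⟩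

/-- The number of faces of `K` of cardinality `i`, i.e. the face number `f_{i-1}(K)`. -/
def faceCount (K : SComplex V) (i : ℕ) : ℕ := (K.faces.filter fun s => s.card = i).card

/-- The Euler characteristic `χ(K) = Σ_{i ≥ 0} (-1)^i f_i(K)`. -/
def eulerChar (K : SComplex V) : ℤ :=
  ∑ s ∈ K.faces.filter (fun s => s ≠ ∅), (-1 : ℤ) ^ (s.card - 1)

/-- The reduced Euler characteristic `χ̃(K) = χ(K) - 1`. -/
def reducedEulerChar (K : SComplex V) : ℤ := eulerChar K - 1

end SComplex

/-! ### Simplicial homology with coefficients in a field `k` -/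

/-- An arbitrary linear order on a finite type. -/
noncomputable def arbOrder (V : Type) [Fintype V] : LinearOrder V :=
  LinearOrder.lift' (Fintype.equivFin V) (Equiv.injective _)

namespace SComplex

variable {V : Type} [DecidableEq V]

/-- The faces of `K` of cardinality `n`, as a type. -/
def Faces (K : SComplex V) (n : ℕ) : Type :=
  {s : Finset V // s ∈ K.faces ∧ s.card = n}

/-- The space of reduced simplicial `n`-chains of `K`: formal `k`-linear combinations of the
faces of cardinality `n` (such a face has dimension `n - 1`; the empty face sits in degree `0`,
which produces *reduced* homology). -/
abbrev ChainsOf (k : Type) [Field k] (K : SComplex V) (n : ℕ) : Type := Faces K n →₀ k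

variable (k : Type) [Field k] [Fintype V]

/-- The simplicial boundary map, with signs determined by an arbitrary but fixed linear order
on the vertices. -/
noncomputable def bd (K : SComplex V) (n : ℕ) :
    ChainsOf k K n →ₗ[k] ChainsOf k K (n - 1) :=
  letI : LinearOrder V := arbOrder V
  Finsupp.lsum k fun s : Faces K n =>
    LinearMap.toSpanSingleton k (ChainsOf k K (n - 1))
      (∑ x ∈ s.1.attach,
        ((-1 : k) ^ (s.1.filter (fun y => y < x.1)).card) •
          Finsupp.single
            (⟨s.1.erase x.1,
              K.down_closed s.2.1 (Finset.erase_subset _ _),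
              by rw [Finset.card_erase_of_mem x.2, s.2.2]⟩ : Faces K (n - 1))
            (1 : k))

/-- `HVanish k K i` says that the reduced simplicial homology `H̃_{i-1}(K; k)` vanishes.
Note the indexing convention: the index `i` is the *cardinality* of the relevant faces, so this
is reduced homology in topological degree `i - 1`; e.g. `HVanish k K 1` says `H̃₀(K; k) = 0`
(`K` is connected and nonempty) and `HVanish k K 0` says `H̃₋₁(K; k) = 0` (`K` has a face).
Since the cycles in degree `i - 1` are `ker ∂ᵢ` and the boundaries are `im ∂ᵢ₊₁`, and the
boundaries are always contained in the cycles, vanishing of homology says exactly that every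
cycle is a boundary. -/
def HVanish (K : SComplex V) (i : ℕ) : Prop :=
  LinearMap.ker (bd k K i) ≤ LinearMap.range (bd k K (i + 1))

/-- `redHomologyRank k K i` is the dimension `dim_k H̃_{i-1}(K; k)` of the reduced simplicial
homology of `K` in topological degree `i - 1` (cardinality index `i`), namely the dimension of
the cycles `ker ∂ᵢ` modulo the boundaries `im ∂ᵢ₊₁`. -/
noncomputable def redHomologyRank (K : SComplex V) (i : ℕ) : ℕ :=
  Module.finrank k ↥(LinearMap.ker (bd k K i)) -
    Module.finrank k ↥(LinearMap.range (bd k K (i + 1)) ⊓ LinearMap.ker (bd k K i))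

end SComplex

/-! ### Depth, Serre conditions, and Stanley–Reisner rings -/

/-- The length of a longest regular sequence on `R` contained in the ideal `I`
(the `I`-depth of `R`). -/
noncomputable def depthIn (R : Type) [CommRing R] (I : Ideal R) : ℕ :=
  sSup {n : ℕ | ∃ rs : List R, rs.length = n ∧ (∀ r ∈ rs, r ∈ I) ∧
    RingTheory.Sequence.IsRegular R rs}

/-- Serre's condition `(S_ℓ)` for a commutative ring:
`depth R_p ≥ min {ℓ, dim R_p}` for every prime `p`. -/
def SerreCondS (ℓ : ℕ) (R : Type) [CommRing R] : Prop :=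
  ∀ (p : Ideal R) (hp : p.IsPrime),
    haveI := hp
    min ((ℓ : ℕ∞) : WithBot ℕ∞) (ringKrullDim (Localization.AtPrime p)) ≤
      ((depthIn (Localization.AtPrime p)
        (IsLocalRing.maximalIdeal (Localization.AtPrime p)) : ℕ∞) : WithBot ℕ∞)

namespace SComplex

variable {V : Type} [DecidableEq V] (k : Type) [Field k]

/-- The Stanley–Reisner ideal of `K`: generated by the squarefree monomials supported on
non-faces. -/
noncomputable def srIdeal (K : SComplex V) : Ideal (MvPolynomial V k) :=
  Ideal.span ((fun s : Finset V => ∏ v ∈ s, MvPolynomial.X v) '' {s : Finset V | s ∉ K.faces})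

/-- The Stanley–Reisner ring `k[Δ]`. -/
noncomputable abbrev SRRing (K : SComplex V) : Type := MvPolynomial V k ⧸ srIdeal k K

/-- `depth k[Δ]`: the depth of the Stanley–Reisner ring with respect to its irrelevant
(graded maximal) ideal. -/
noncomputable def srDepth (K : SComplex V) : ℕ :=
  depthIn (SRRing k K)
    (Ideal.span (Set.range fun v : V => Ideal.Quotient.mk (srIdeal k K) (MvPolynomial.X v)))

/-- `k[Δ]` satisfies Serre's condition `(S_ℓ)`. -/
def SerreS (ℓ : ℕ) (K : SComplex V) : Prop := SerreCondS ℓ (SRRing k K)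

end SComplex

/-! ### Order complexes of finite posets -/

/-- The order complex `O(P)` of a finite poset: its faces are the chains of `P`. -/
def orderComplex (P : Type) [DecidableEq P] [Fintype P] [PartialOrder P]
    [∀ a b : P, Decidable (a ≤ b)] : SComplex P where
  faces := Finset.univ.filter fun C : Finset P => ∀ a ∈ C, ∀ b ∈ C, a ≤ b ∨ b ≤ a
  down_closed := by
    intro s t hs hts
    simp only [Finset.mem_filter, Finset.mem_univ, true_and] at hs ⊢
    exact fun a ha b hb => hs a (hts ha) b (hts hb)

/-- The height of an element of a finite poset: the maximal cardinality of a chain with top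
element `p` (so minimal elements have height `1`). -/
def pheight {P : Type} [DecidableEq P] [Fintype P] [PartialOrder P]
    [∀ a b : P, Decidable (a ≤ b)] (p : P) : ℕ :=
  Finset.sup (Finset.univ.filter fun C : Finset P =>
    p ∈ C ∧ (∀ a ∈ C, a ≤ p) ∧ ∀ a ∈ C, ∀ b ∈ C, a ≤ b ∨ b ≤ a) Finset.card

/-- The height `ht P` of a finite poset: the maximal cardinality of a chain. -/
def pheightMax (P : Type) [DecidableEq P] [Fintype P] [PartialOrder P]
    [∀ a b : P, Decidable (a ≤ b)] : ℕ :=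
  Finset.univ.sup (pheight (P := P))

/-- `O(P_{>j})`: the full subcomplex of the order complex on the elements of height `> j`. -/
def ocAbove (P : Type) [DecidableEq P] [Fintype P] [PartialOrder P]
    [∀ a b : P, Decidable (a ≤ b)] (j : ℕ) : SComplex P :=
  (orderComplex P).restrict (Finset.univ.filter fun p => j < pheight p)

/-- The face poset `F(Δ)` of a simplicial complex: the nonempty faces, ordered by inclusion. -/
abbrev SComplex.FacePoset {V : Type} [DecidableEq V] (K : SComplex V) : Type :=
  {s : Finset V // s ∈ K.faces ∧ s ≠ ∅}

instance {V : Type} [DecidableEq V] (K : SComplex V) :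
    ∀ a b : K.FacePoset, Decidable (a ≤ b) := fun a b =>
  decidable_of_iff (a.1 ≤ b.1) Subtype.coe_le_coe

/-! ### Depth of modules over Noetherian local rings -/

section Depth

open RingTheory.Sequence IsLocalRing CategoryTheory CategoryTheory.Abelian

/-- `M` admits a regular sequence of length `n` in the maximal ideal. -/
def HasRegularSeq (L : Type) [CommRing L] [IsLocalRing L] (M : Type) [AddCommGroup M] [Module L M]
    (n : ℕ) : Prop :=
  ∃ rs : List L, rs.length = n ∧ (∀ r ∈ rs, r ∈ maximalIdeal L) ∧ IsRegular M rs

/-- `Ext^i(κ, M) = 0` for all `i < n`, where `κ` is the residue field. -/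
def ExtVanishBelow (L : Type) [CommRing L] [IsLocalRing L] (M : Type) [AddCommGroup M] [Module L M]
    (n : ℕ) : Prop :=
  ∀ i < n, Subsingleton (Ext (ModuleCat.of L (ResidueField L)) (ModuleCat.of L M) i)

variable {L : Type} [CommRing L]
variable {M N P : Type} [AddCommGroup M] [Module L M] [AddCommGroup N] [Module L N]
  [AddCommGroup P] [Module L P]

/-- The short complex attached to a pair of exact linear maps. -/
def moduleShortComplex (f : M →ₗ[L] N) (g : N →ₗ[L] P) (h : Function.Exact f g) :
    ShortComplex (ModuleCat.{0} L) :=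
  ShortComplex.mk (ModuleCat.ofHom f) (ModuleCat.ofHom g) (by
    ext x
    exact h.apply_apply_eq_zero x)

lemma moduleShortComplex_shortExact {f : M →ₗ[L] N} {g : N →ₗ[L] P} (h : Function.Exact f g)
    (hf : Function.Injective f) (hg : Function.Surjective g) :
    (moduleShortComplex f g h).ShortExact where
  exact := (ShortComplex.ShortExact.moduleCat_exact_iff_function_exact _).mpr h
  mono_f := (ModuleCat.mono_iff_injective _).mpr hf
  epi_g := (ModuleCat.epi_iff_surjective _).mpr hg

variable [IsLocalRing L]

lemma maximalIdeal_smul_top_lt [Module.Finite L M] [Nontrivial M] :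
    maximalIdeal L • (⊤ : Submodule L (ModuleCat.of L M)) < ⊤ := by
  refine lt_top_iff_ne_top.mpr fun h => ?_
  have := Submodule.eq_bot_of_le_smul_of_le_jacobson_bot (maximalIdeal L)
    (⊤ : Submodule L (ModuleCat.of L M)) Module.Finite.fg_top h.ge
    (maximalIdeal_le_jacobson ⊥)
  exact (bot_ne_top (α := Submodule L M)) this.symm

lemma support_residueField :
    Module.support L (ModuleCat.of L (ResidueField L)) =
      PrimeSpectrum.zeroLocus (maximalIdeal L : Set L) := by
  change Module.support L (L ⧸ maximalIdeal L) = _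
  rw [Module.support_eq_zeroLocus, Ideal.annihilator_quotient]

lemma finite_residueField : Module.Finite L (ModuleCat.of L (ResidueField L)) :=
  inferInstanceAs (Module.Finite L (L ⧸ maximalIdeal L))

lemma HasRegularSeq.extVanishBelow [IsNoetherianRing L] [Module.Finite L M] {n : ℕ}
    (h : HasRegularSeq L M n) : ExtVanishBelow L M n := by
  obtain ⟨rs, rfl, mem, reg⟩ := h
  have := reg.nontrivial
  have := finite_residueField (L := L)
  have : Module.Finite L (ModuleCat.of L M) := ‹Module.Finite L M›
  exact ModuleCat.subsingleton_ext_of_exists_isRegular (maximalIdeal L) _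
    support_residueField.subset (ModuleCat.of L M) maximalIdeal_smul_top_lt rs mem reg

lemma ExtVanishBelow.hasRegularSeq [IsNoetherianRing L] [Module.Finite L M] [Nontrivial M] {n : ℕ}
    (h : ExtVanishBelow L M n) : HasRegularSeq L M n := by
  have := finite_residueField (L := L)
  have : Module.Finite L (ModuleCat.of L M) := ‹Module.Finite L M›
  exact ModuleCat.exists_isRegular_of_exists_subsingleton_ext (maximalIdeal L) n
    (ModuleCat.of L M) maximalIdeal_smul_top_lt _ support_residueField h

lemma ExtVanishBelow.mono {m n : ℕ} (h : ExtVanishBelow L M n) (hmn : m ≤ n) :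
    ExtVanishBelow L M m := fun i hi => h i (hi.trans_le hmn)

lemma extVanishBelow_of_subsingleton [Subsingleton M] (n : ℕ) : ExtVanishBelow L M n := by
  intro i _
  have hz : Limits.IsZero (ModuleCat.of L M) := ModuleCat.isZero_of_subsingleton _
  refine subsingleton_of_forall_eq 0 fun e => ?_
  rw [← Ext.comp_mk₀_id e, hz.eq_of_src (𝟙 _) 0, Ext.mk₀_zero, Ext.comp_zero]

lemma ExtVanishBelow.middle {f : M →ₗ[L] N} {g : N →ₗ[L] P} (h : Function.Exact f g)
    (hf : Function.Injective f) (hg : Function.Surjective g) {n : ℕ}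
    (hM : ExtVanishBelow L M n) (hP : ExtVanishBelow L P n) : ExtVanishBelow L N n := by
  intro i hi
  have zero1 := AddCommGrpCat.isZero_of_iff_subsingleton.mpr (hM i hi)
  have zero2 := AddCommGrpCat.isZero_of_iff_subsingleton.mpr (hP i hi)
  exact AddCommGrpCat.subsingleton_of_isZero <| ShortComplex.Exact.isZero_of_both_zeros
    (Ext.covariant_sequence_exact₂' (ModuleCat.of L (ResidueField L))
      (moduleShortComplex_shortExact h hf hg) i)
    (zero1.eq_zero_of_src _) (zero2.eq_zero_of_tgt _)

lemma ExtVanishBelow.right {f : M →ₗ[L] N} {g : N →ₗ[L] P} (h : Function.Exact f g)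
    (hf : Function.Injective f) (hg : Function.Surjective g) {n : ℕ}
    (hM : ExtVanishBelow L M (n + 1)) (hN : ExtVanishBelow L N n) : ExtVanishBelow L P n := by
  intro i hi
  have zero1 := AddCommGrpCat.isZero_of_iff_subsingleton.mpr (hN i hi)
  have zero2 := AddCommGrpCat.isZero_of_iff_subsingleton.mpr (hM (i + 1) (by omega))
  exact AddCommGrpCat.subsingleton_of_isZero <| ShortComplex.Exact.isZero_of_both_zeros
    (Ext.covariant_sequence_exact₃' (ModuleCat.of L (ResidueField L))
      (moduleShortComplex_shortExact h hf hg) i (i + 1) rfl)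
    (zero1.eq_zero_of_src _) (zero2.eq_zero_of_tgt _)

lemma ExtVanishBelow.congr (e : M ≃ₗ[L] N) {n : ℕ} (hM : ExtVanishBelow L M n) :
    ExtVanishBelow L N n :=
  ExtVanishBelow.middle (f := e.toLinearMap) (g := (0 : N →ₗ[L] PUnit.{1}))
    (fun y => by simp) e.injective (fun y => ⟨0, Subsingleton.elim _ _⟩) hM
    (extVanishBelow_of_subsingleton n)

lemma HasRegularSeq.of_ringEquiv {L' : Type} [CommRing L'] [IsLocalRing L'] (e : L ≃+* L') {n : ℕ}
    (h : HasRegularSeq L L n) : HasRegularSeq L' L' n := by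
  obtain ⟨rs, len, mem, reg⟩ := h
  refine ⟨rs.map e, by simpa using len, ?_, ?_⟩
  · simp only [List.mem_map, forall_exists_index, and_imp, forall_apply_eq_imp_iff₂]
    intro r hr
    simpa [mem_maximalIdeal, mem_nonunits_iff] using mem r hr
  · refine (e.toAddEquiv.isRegular_congr ?_).mp reg
    rw [List.forall₂_map_right_iff, List.forall₂_same]
    intro r _ x
    simp

/-- Regular sequences on a local quotient ring, viewed as a ring or as a module. -/
lemma hasRegularSeq_quotient_iff {T : Type} [CommRing T] [IsLocalRing T] [Algebra L T]
    (hs : Function.Surjective (algebraMap L T)) {n : ℕ} :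
    HasRegularSeq L T n ↔ HasRegularSeq T T n := by
  have hloc : IsLocalHom (algebraMap L T) := IsLocalHom.of_surjective _ hs
  have key : ∀ rs : List L, (∀ r ∈ rs, r ∈ maximalIdeal L) →
      (IsRegular T rs ↔ IsRegular T (rs.map (algebraMap L T))) := by
    intro rs mem
    have : Module.Finite L T := Module.Finite.of_surjective (Algebra.linearMap L T) hs
    rw [isRegular_iff_isWeaklyRegular_of_subset_maximalIdeal mem,
      isRegular_iff_isWeaklyRegular_of_subset_maximalIdeal, isWeaklyRegular_map_algebraMap_iff]
    simpa [mem_maximalIdeal, mem_nonunits_iff] using mem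
  constructor
  · rintro ⟨rs, len, mem, reg⟩
    refine ⟨rs.map (algebraMap L T), by simpa using len, ?_, (key rs mem).mp reg⟩
    simpa [mem_maximalIdeal, mem_nonunits_iff] using mem
  · rintro ⟨rs, len, mem, reg⟩
    obtain ⟨rs, rfl⟩ := List.map_surjective_iff.mpr hs rs
    have mem' : ∀ r ∈ rs, r ∈ maximalIdeal L := by
      simpa [mem_maximalIdeal, mem_nonunits_iff] using mem
    exact ⟨rs, by simpa using len, mem', (key rs mem').mpr reg⟩

lemma bddAbove_length_isRegular [IsNoetherianRing L] :
    BddAbove {n : ℕ | ∃ rs : List L, rs.length = n ∧ (∀ r ∈ rs, r ∈ maximalIdeal L) ∧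
      IsRegular L rs} := by
  have hfin : ringKrullDim L ≠ ⊤ := ringKrullDim_ne_top
  obtain ⟨d, hd⟩ : ∃ d : ℕ, ringKrullDim L ≤ d := by
    induction hd : ringKrullDim L with
    | bot => exact ⟨0, bot_le⟩
    | coe a =>
      induction a with
      | top => exact absurd hd hfin
      | coe d => exact ⟨d, le_rfl⟩
  refine ⟨d, ?_⟩
  rintro _ ⟨rs, rfl, _, reg⟩
  have h := ringKrullDim_add_length_eq_ringKrullDim_of_isRegular rs reg
  have hnt : Nontrivial (L ⧸ Ideal.ofList rs) := by
    refine Ideal.Quotient.nontrivial_iff.mpr fun htop => reg.top_ne_smul ?_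
    rw [htop, Submodule.top_smul]
  have h0 : (0 : WithBot ℕ∞) ≤ ringKrullDim (L ⧸ Ideal.ofList rs) := ringKrullDim_nonneg_of_nontrivial
  have h2 : ((rs.length : ℕ) : WithBot ℕ∞) ≤ d := by
    refine le_trans ?_ (h.le.trans hd)
    exact le_add_of_nonneg_left h0
  exact_mod_cast h2

lemma le_depthIn_iff [IsNoetherianRing L] {n : ℕ} :
    n ≤ depthIn L (maximalIdeal L) ↔ HasRegularSeq L L n := by
  constructor
  · intro h
    have hmem : HasRegularSeq L L (depthIn L (maximalIdeal L)) := by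
      refine Nat.sSup_mem (Set.nonempty_of_mem (x := 0) ?_) bddAbove_length_isRegular
      exact ⟨[], rfl, by simp, IsRegular.nil L L⟩
    exact ((HasRegularSeq.extVanishBelow hmem).mono h).hasRegularSeq
  · exact fun h => le_csSup bddAbove_length_isRegular h

end Depth

/-! ### Stanley–Reisner ideals and restriction to faces -/

section StanleyReisner

open MvPolynomial

variable {V : Type} {k : Type} [Field k]

/-- Setting the variables outside `F` to zero. -/
noncomputable def restrictVars (k : Type) [Field k] (F : Finset V) :
    MvPolynomial V k →ₐ[k] MvPolynomial F k :=
  killCompl (Subtype.val_injective (p := fun v => v ∈ F))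

@[simp]
lemma restrictVars_rename (F : Finset V) (f : MvPolynomial F k) :
    restrictVars k F (rename Subtype.val f) = f :=
  killCompl_rename_app _ f

lemma restrictVars_X_of_mem {F : Finset V} {v : V} (hv : v ∈ F) :
    restrictVars k F (X v) = X ⟨v, hv⟩ := by
  simpa using restrictVars_rename (k := k) F (X ⟨v, hv⟩)

lemma restrictVars_X_of_notMem {F : Finset V} {v : V} (hv : v ∉ F) :
    restrictVars k F (X v) = 0 := by
  simp [restrictVars, killCompl, hv]

lemma sub_rename_restrictVars_mem (F : Finset V) (f : MvPolynomial V k) :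
    f - rename Subtype.val (restrictVars k F f) ∈ Ideal.span (X '' {v | v ∉ F}) := by
  rw [← Ideal.Quotient.eq]
  refine DFunLike.congr_fun (f := Ideal.Quotient.mkₐ k _)
    (g := ((Ideal.Quotient.mkₐ k _).comp (rename Subtype.val)).comp (restrictVars k F)) ?_ f
  ext v
  by_cases hv : v ∈ F
  · simp [restrictVars_X_of_mem hv]
  · simpa [restrictVars_X_of_notMem hv] using
      Ideal.Quotient.eq_zero_iff_mem.mpr (Ideal.subset_span (Set.mem_image_of_mem X hv))

lemma restrictVars_eq_zero_iff_mem {F : Finset V} {f : MvPolynomial V k} :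
    restrictVars k F f = 0 ↔ f ∈ Ideal.span (X '' {v | v ∉ F}) := by
  constructor
  · intro h
    simpa [h] using sub_rename_restrictVars_mem F f
  · have : Ideal.span (X '' {v | v ∉ F}) ≤ RingHom.ker (restrictVars k F) := by
      rw [Ideal.span_le]
      rintro _ ⟨v, hv, rfl⟩
      exact restrictVars_X_of_notMem hv
    exact fun h => this h

lemma restrictVars_eq_zero_iff {F : Finset V} {f : MvPolynomial V k} :
    restrictVars k F f = 0 ↔ ∀ m ∈ f.support, ¬ m.support ⊆ F := by
  rw [restrictVars_eq_zero_iff_mem, mem_ideal_span_X_image]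
  refine forall₂_congr fun m _ => ?_
  simp only [Finset.not_subset, Finsupp.mem_support_iff, Set.mem_ofPred_eq]
  exact exists_congr fun v => and_comm

lemma restrictVars_eq_zero_of_subset {F G : Finset V} (h : F ⊆ G) {f : MvPolynomial V k}
    (hf : restrictVars k G f = 0) : restrictVars k F f = 0 := by
  rw [restrictVars_eq_zero_iff] at hf ⊢
  exact fun m hm hF => hf m hm (hF.trans h)

lemma restrictVars_prod_ne_zero {s F : Finset V} (h : s ⊆ F) :
    restrictVars k F (∏ v ∈ s, X v) ≠ 0 := by
  rw [map_prod, Finset.prod_ne_zero_iff]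
  intro v hv
  rw [restrictVars_X_of_mem (h hv)]
  exact X_ne_zero _

lemma restrictVars_prod_eq_zero {s F : Finset V} (h : ¬ s ⊆ F) :
    restrictVars k F (∏ v ∈ s, X v) = 0 := by
  obtain ⟨v, hv, hvF⟩ := Finset.not_subset.mp h
  rw [map_prod]
  exact Finset.prod_eq_zero hv (restrictVars_X_of_notMem hvF)

namespace SComplex

variable [DecidableEq V] {K K' : SComplex V}

lemma IsFacet.exists_superset {s : Finset V} (hs : s ∈ K.faces) : ∃ F, K.IsFacet F ∧ s ⊆ F := by
  obtain ⟨F, hsF, hF⟩ := K.faces.exists_le_maximal hs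
  exact ⟨F, ⟨hF.prop, fun G hG h => h.antisymm (hF.le_of_ge hG h)⟩, hsF⟩

lemma mem_srIdeal_iff_support {f : MvPolynomial V k} :
    f ∈ srIdeal k K ↔ ∀ m ∈ f.support, m.support ∉ K.faces := by
  have hmon : ∀ s : Finset V, (∏ v ∈ s, X v : MvPolynomial V k) =
      monomial (∑ v ∈ s, Finsupp.single v 1) 1 := fun s => by
    rw [monomial_sum_one]
    rfl
  have hle : ∀ (s : Finset V) (m : V →₀ ℕ),
      ∑ v ∈ s, Finsupp.single v 1 ≤ m ↔ s ⊆ m.support := by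
    intro s m
    have hval : ∀ v, (∑ v ∈ s, Finsupp.single v 1 : V →₀ ℕ) v = if v ∈ s then 1 else 0 := by
      intro v
      simp [Finsupp.finsetSum_apply, Finsupp.single_apply]
    constructor
    · intro h v hv
      have := h v
      rw [hval, if_pos hv] at this
      exact Finsupp.mem_support_iff.mpr (by omega)
    · intro h v
      rw [hval]
      split_ifs with hv
      · exact Nat.one_le_iff_ne_zero.mpr (Finsupp.mem_support_iff.mp (h hv))
      · exact Nat.zero_le _
  have himage : (fun s : Finset V => ∏ v ∈ s, X v) '' {s : Finset V | s ∉ K.faces} =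
      (fun m => monomial m (1 : k)) ''
        ((fun s : Finset V => ∑ v ∈ s, Finsupp.single v 1) '' {s : Finset V | s ∉ K.faces}) := by
    rw [Set.image_image]
    exact Set.image_congr fun s _ => hmon s
  rw [srIdeal, himage, mem_ideal_span_monomial_image]
  refine forall₂_congr fun m _ => ?_
  constructor
  · rintro ⟨_, ⟨s, hs, rfl⟩, hsm⟩ hm
    exact hs (K.down_closed hm ((hle s m).mp hsm))
  · exact fun h => ⟨_, ⟨m.support, h, rfl⟩, (hle _ m).mpr subset_rfl⟩

lemma mem_srIdeal_iff {f : MvPolynomial V k} :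
    f ∈ srIdeal k K ↔ ∀ F ∈ K.faces, restrictVars k F f = 0 := by
  simp only [mem_srIdeal_iff_support, restrictVars_eq_zero_iff]
  exact ⟨fun h F hF m hm hmF => h m hm (K.down_closed hF hmF),
    fun h m hm hmK => h _ hmK m hm subset_rfl⟩

lemma mem_srIdeal_iff_isFacet {f : MvPolynomial V k} :
    f ∈ srIdeal k K ↔ ∀ F, K.IsFacet F → restrictVars k F f = 0 := by
  rw [mem_srIdeal_iff]
  refine ⟨fun h F hF => h F hF.1, fun h F hF => ?_⟩
  obtain ⟨G, hG, hFG⟩ := IsFacet.exists_superset hF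
  exact restrictVars_eq_zero_of_subset hFG (h G hG)

lemma prod_X_mem_srIdeal {s : Finset V} (hs : s ∉ K.faces) : ∏ v ∈ s, X v ∈ srIdeal k K :=
  Ideal.subset_span ⟨s, hs, rfl⟩

lemma X_mem_srIdeal {v : V} (hv : {v} ∉ K.faces) : X v ∈ srIdeal k K := by
  simpa using prod_X_mem_srIdeal (k := k) hv

lemma srIdeal_anti (h : K'.faces ⊆ K.faces) : srIdeal k K ≤ srIdeal k K' :=
  fun _ hf => mem_srIdeal_iff.mpr fun F hF => mem_srIdeal_iff.mp hf F (h hF)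

/-- The class of the squarefree monomial supported on `s`. -/
noncomputable def faceMonomial (k : Type) [Field k] (K : SComplex V) (s : Finset V) :
    SRRing k K :=
  Ideal.Quotient.mk _ (∏ v ∈ s, X v)

/-- The restriction `k[K] → k[x_v : v ∈ F]` to a face. -/
noncomputable def toFace (k : Type) [Field k] {K : SComplex V} {F : Finset V} (hF : F ∈ K.faces) :
    SRRing k K →ₐ[k] MvPolynomial F k :=
  Ideal.Quotient.liftₐ _ (restrictVars k F) fun _ hf => mem_srIdeal_iff.mp hf F hF

/-- The section of `toFace`. -/
noncomputable def ofFace (k : Type) [Field k] (K : SComplex V) (F : Finset V) :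
    MvPolynomial F k →ₐ[k] SRRing k K :=
  (Ideal.Quotient.mkₐ k _).comp (rename Subtype.val)

@[simp]
lemma toFace_ofFace {F : Finset V} (hF : F ∈ K.faces) (f : MvPolynomial F k) :
    toFace k hF (ofFace k K F f) = f :=
  restrictVars_rename F f

lemma toFace_surjective {F : Finset V} (hF : F ∈ K.faces) :
    Function.Surjective (toFace k hF) :=
  fun f => ⟨_, toFace_ofFace hF f⟩

lemma eq_zero_of_toFace {f : SRRing k K} (h : ∀ F (hF : K.IsFacet F), toFace k hF.1 f = 0) :
    f = 0 := by
  obtain ⟨f, rfl⟩ := Ideal.Quotient.mk_surjective f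
  exact Ideal.Quotient.eq_zero_iff_mem.mpr (mem_srIdeal_iff_isFacet.mpr h)

lemma toFace_faceMonomial_ne_zero {s F : Finset V} (hF : F ∈ K.faces) (h : s ⊆ F) :
    toFace k hF (faceMonomial k K s) ≠ 0 :=
  restrictVars_prod_ne_zero h

lemma toFace_faceMonomial_eq_zero {s F : Finset V} (hF : F ∈ K.faces) (h : ¬ s ⊆ F) :
    toFace k hF (faceMonomial k K s) = 0 :=
  restrictVars_prod_eq_zero h

lemma faceMonomial_eq_zero {s : Finset V} (hs : s ∉ K.faces) : faceMonomial k K s = 0 :=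
  Ideal.Quotient.eq_zero_iff_mem.mpr (prod_X_mem_srIdeal hs)

lemma faceMonomial_mul_eq_zero {s t : Finset V} (h : s ∪ t ∉ K.faces) :
    faceMonomial k K s * faceMonomial k K t = 0 := by
  refine eq_zero_of_toFace fun F hF => ?_
  rw [map_mul]
  by_cases hs : s ⊆ F
  · have ht : ¬ t ⊆ F := fun ht => h (K.down_closed hF.1 (Finset.union_subset hs ht))
    rw [toFace_faceMonomial_eq_zero hF.1 ht, mul_zero]
  · rw [toFace_faceMonomial_eq_zero hF.1 hs, zero_mul]

instance (K : SComplex V) : IsReduced (SRRing k K) where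
  eq_zero f := by
    rintro ⟨n, hn⟩
    refine eq_zero_of_toFace fun F hF => ?_
    have h := congrArg (toFace k hF.1) hn
    rw [map_pow, map_zero] at h
    exact eq_zero_of_pow_eq_zero h

instance (K : SComplex V) : IsNoetherianRing (SRRing k K) := by
  refine isNoetherianRing_of_surjective _ _ (ofFace k K (K.faces.sup id)).toRingHom ?_
  intro f
  obtain ⟨f, rfl⟩ := Ideal.Quotient.mk_surjective f
  change Ideal.Quotient.mkₐ k (srIdeal k K) f ∈ (ofFace k K (K.faces.sup id)).range
  induction f using MvPolynomial.induction_on with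
  | C a => exact ⟨C a, by simp [ofFace]⟩
  | add f g hf hg => exact map_add (Ideal.Quotient.mkₐ k (srIdeal k K)) f g ▸ add_mem hf hg
  | mul_X f v hf =>
    rw [map_mul]
    refine mul_mem hf ?_
    by_cases hv : {v} ∈ K.faces
    · have hv' : v ∈ K.faces.sup id := Finset.mem_sup.mpr ⟨{v}, hv, by simp⟩
      exact ⟨X ⟨v, hv'⟩, by simp [ofFace]⟩
    · rw [Ideal.Quotient.mkₐ_eq_mk, Ideal.Quotient.eq_zero_iff_mem.mpr (X_mem_srIdeal hv)]
      exact zero_mem _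

/-- Over an excellent set of faces the sum of the face monomials is a nonzerodivisor. -/
lemma sum_faceMonomial_mem_nonZeroDivisors {A : Finset (Finset V)}
    (hindep : ∀ σ ∈ A, ∀ τ ∈ A, σ ≠ τ → σ ∪ τ ∉ K.faces)
    (hexc : ∀ F : Finset V, K.IsFacet F → ∃ σ ∈ A, σ ⊆ F) :
    ∑ σ ∈ A, faceMonomial k K σ ∈ nonZeroDivisors (SRRing k K) := by
  rw [mem_nonZeroDivisors_iff_right]
  intro f hf
  refine eq_zero_of_toFace fun F hF => ?_
  obtain ⟨σ, hσ, hσF⟩ := hexc F hF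
  have h := congrArg (toFace k hF.1) hf
  rw [map_mul, map_zero, map_sum, Finset.sum_eq_single σ] at h
  · exact (mul_eq_zero.mp h).resolve_right (toFace_faceMonomial_ne_zero hF.1 hσF)
  · intro τ hτ hne
    refine toFace_faceMonomial_eq_zero hF.1 fun hτF => ?_
    exact hindep τ hτ σ hσ hne (K.down_closed hF.1 (Finset.union_subset hτF hσF))
  · exact fun h => absurd hσ h

/-- The projection of Stanley–Reisner rings attached to a subcomplex. -/
noncomputable def toSubcomplex (k : Type) [Field k] (h : K'.faces ⊆ K.faces) :
    SRRing k K →+* SRRing k K' :=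
  Ideal.Quotient.factor (srIdeal_anti h)

lemma toSubcomplex_surjective (h : K'.faces ⊆ K.faces) :
    Function.Surjective (toSubcomplex k h) :=
  Ideal.Quotient.factor_surjective _

@[simp]
lemma toSubcomplex_mk (h : K'.faces ⊆ K.faces) (f : MvPolynomial V k) :
    toSubcomplex k h (Ideal.Quotient.mk _ f) = Ideal.Quotient.mk _ f := rfl

lemma deleteAbove_faces_subset (A : Finset (Finset V)) : (K.deleteAbove A).faces ⊆ K.faces :=
  Finset.filter_subset _ _

lemma ker_toSubcomplex_deleteAbove (A : Finset (Finset V)) :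
    RingHom.ker (toSubcomplex k (K.deleteAbove_faces_subset A)) =
      Ideal.span (faceMonomial k K '' (A : Set (Finset V))) := by
  refine le_antisymm ?_ ?_
  · rw [toSubcomplex, Ideal.Quotient.factor_ker, Ideal.map_le_iff_le_comap, srIdeal,
      Ideal.span_le]
    rintro _ ⟨s, hs, rfl⟩
    simp only [deleteAbove, Finset.mem_filter, Set.mem_ofPred_eq, not_and, not_forall, not_not] at hs
    change faceMonomial k K s ∈ Ideal.span (faceMonomial k K '' (A : Set (Finset V)))
    by_cases hsK : s ∈ K.faces
    · obtain ⟨τ, hτ, hτs⟩ := hs hsK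
      have : faceMonomial k K s = faceMonomial k K (s \ τ) * faceMonomial k K τ := by
        rw [faceMonomial, ← Finset.prod_sdiff hτs, map_mul]
        rfl
      rw [this]
      exact Ideal.mul_mem_left _ _ (Ideal.subset_span ⟨τ, hτ, rfl⟩)
    · rw [faceMonomial_eq_zero hsK]
      exact zero_mem _
  · rw [Ideal.span_le]
    rintro _ ⟨σ, hσ, rfl⟩
    refine Ideal.Quotient.eq_zero_iff_mem.mpr (prod_X_mem_srIdeal ?_)
    simp only [deleteAbove, Finset.mem_filter, not_and, not_forall, not_not]
    exact fun _ => ⟨σ, hσ, subset_rfl⟩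

/-- The closed star of `σ`. -/
def closedStar (K : SComplex V) (σ : Finset V) : SComplex V where
  faces := K.faces.filter fun s => σ ∪ s ∈ K.faces
  down_closed := by
    intro s t hs hts
    simp only [Finset.mem_filter] at hs ⊢
    exact ⟨K.down_closed hs.1 hts,
      K.down_closed hs.2 (Finset.union_subset_union_right hts)⟩

lemma closedStar_faces_subset (σ : Finset V) : (K.closedStar σ).faces ⊆ K.faces :=
  Finset.filter_subset _ _

lemma mem_closedStar_iff {σ s : Finset V} :
    s ∈ (K.closedStar σ).faces ↔ σ ∪ s ∈ K.faces := by
  simp only [closedStar, Finset.mem_filter, and_iff_right_iff_imp]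
  exact fun h => K.down_closed h Finset.subset_union_right

lemma toSubcomplex_closedStar_eq_zero_iff {σ : Finset V} {f : SRRing k K} :
    toSubcomplex k (K.closedStar_faces_subset σ) f = 0 ↔ faceMonomial k K σ * f = 0 := by
  obtain ⟨f, rfl⟩ := Ideal.Quotient.mk_surjective f
  rw [toSubcomplex_mk, faceMonomial, ← map_mul, Ideal.Quotient.eq_zero_iff_mem,
    Ideal.Quotient.eq_zero_iff_mem, mem_srIdeal_iff, mem_srIdeal_iff]
  constructor
  · intro h F hF
    rw [map_mul]
    by_cases hσ : σ ⊆ F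
    · rw [h F, mul_zero]
      rwa [mem_closedStar_iff, Finset.union_eq_right.mpr hσ]
    · rw [restrictVars_prod_eq_zero hσ, zero_mul]
  · intro h F hF
    refine restrictVars_eq_zero_of_subset Finset.subset_union_right ?_ (G := σ ∪ F)
    have := h _ (mem_closedStar_iff.mp hF)
    rw [map_mul] at this
    exact (mul_eq_zero.mp this).resolve_left (restrictVars_prod_ne_zero Finset.subset_union_left)

end SComplex

end StanleyReisner

/-! ### Heights of primes in Stanley–Reisner rings -/

section Height

open MvPolynomial

lemma height_comap_le_height_of_surjective {R S : Type} [CommRing R] [CommRing S] (f : R →+* S)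
    (hf : Function.Surjective f) {P : Ideal R} [hP : P.IsPrime] {Q : Ideal S} [hQ : Q.IsPrime]
    (h : Q.comap f = P) : Q.height ≤ P.height := by
  subst h
  have hmono : StrictMono (PrimeSpectrum.comap f) := by
    refine Monotone.strictMono_of_injective (fun a b hab => Ideal.comap_mono hab) ?_
    exact PrimeSpectrum.comap_injective_of_surjective f hf
  have := Order.height_le_height_apply_of_strictMono _ hmono ⟨Q, hQ⟩
  rwa [← PrimeSpectrum.height_eq_orderHeight, ← PrimeSpectrum.height_eq_orderHeight] at this

namespace SComplex

variable {V : Type} {k : Type} [Field k] [DecidableEq V] {K K' : SComplex V}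

/-- The class of a variable in the Stanley–Reisner ring. -/
noncomputable def var (k : Type) [Field k] (K : SComplex V) (v : V) : SRRing k K :=
  Ideal.Quotient.mk _ (X v)

lemma faceMonomial_eq_prod (s : Finset V) : faceMonomial k K s = ∏ v ∈ s, var k K v :=
  map_prod _ _ _

lemma ofFace_X {F : Finset V} (v : F) : ofFace k K F (X v) = var k K v := by
  simp [ofFace, var]

@[simp]
lemma toSubcomplex_var (h : K'.faces ⊆ K.faces) (v : V) :
    toSubcomplex k h (var k K v) = var k K' v := rfl

@[simp]
lemma toSubcomplex_ofFace (h : K'.faces ⊆ K.faces) {F : Finset V} (f : MvPolynomial F k) :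
    toSubcomplex k h (ofFace k K F f) = ofFace k K' F f := rfl

lemma toFace_var_of_mem {F : Finset V} (hF : F ∈ K.faces) {v : V} (hv : v ∈ F) :
    toFace k hF (var k K v) = X ⟨v, hv⟩ :=
  restrictVars_X_of_mem hv

lemma toFace_var_of_notMem {F : Finset V} (hF : F ∈ K.faces) {v : V} (hv : v ∉ F) :
    toFace k hF (var k K v) = 0 :=
  restrictVars_X_of_notMem hv

@[ext]
lemma algHom_ext {B : Type} [Semiring B] [Algebra k B] {f g : SRRing k K →ₐ[k] B}
    (h : ∀ v, f (var k K v) = g (var k K v)) : f = g := by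
  apply Ideal.Quotient.algHom_ext
  ext v
  exact h v

lemma exists_isFacet_var_mem (p : Ideal (SRRing k K)) [hp : p.IsPrime] :
    ∃ F, K.IsFacet F ∧ ∀ v ∉ F, var k K v ∈ p := by
  classical
  let τ := (K.faces.sup id).filter fun v => var k K v ∉ p
  have hτ : τ ∈ K.faces := by
    by_contra h
    have h0 : ∏ v ∈ τ, var k K v ∈ p := by
      rw [← faceMonomial_eq_prod, faceMonomial_eq_zero h]
      exact zero_mem p
    obtain ⟨v, hv, hvp⟩ := hp.prod_mem_iff.mp h0
    exact (Finset.mem_filter.mp hv).2 hvp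
  obtain ⟨F, hF, hτF⟩ := IsFacet.exists_superset hτ
  refine ⟨F, hF, fun v hv => ?_⟩
  by_cases hvK : {v} ∈ K.faces
  · by_contra hvp
    exact hv (hτF (Finset.mem_filter.mpr ⟨Finset.mem_sup.mpr ⟨{v}, hvK, by simp⟩, hvp⟩))
  · rw [var, Ideal.Quotient.eq_zero_iff_mem.mpr (X_mem_srIdeal hvK)]
    exact zero_mem p

lemma ofFace_toFace_mem_iff {p : Ideal (SRRing k K)} {F : Finset V} (hF : F ∈ K.faces)
    (hp : ∀ v ∉ F, var k K v ∈ p) (r : SRRing k K) : ofFace k K F (toFace k hF r) ∈ p ↔ r ∈ p := by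
  have : ((Ideal.Quotient.mkₐ k p).comp (ofFace k K F)).comp (toFace k hF) =
      Ideal.Quotient.mkₐ k p := by
    apply algHom_ext
    intro v
    by_cases hv : v ∈ F
    · simp [toFace_var_of_mem hF hv, ofFace_X]
    · simpa [toFace_var_of_notMem hF hv] using
        (Ideal.Quotient.eq_zero_iff_mem.mpr (hp v hv)).symm
  rw [← Ideal.Quotient.eq_zero_iff_mem, ← Ideal.Quotient.eq_zero_iff_mem (a := r)]
  exact iff_of_eq (congrArg (· = 0) (DFunLike.congr_fun this r))

lemma exists_isFacet_height_le (p : Ideal (SRRing k K)) [hp : p.IsPrime] :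
    ∃ F, K.IsFacet F ∧ (∀ v ∉ F, var k K v ∈ p) ∧ p.height ≤ (p.comap (ofFace k K F)).height := by
  obtain ⟨l, hlast, hlen⟩ := p.exists_ltSeries_length_eq_height
  obtain ⟨F, hF, hvar⟩ := exists_isFacet_var_mem l.head.asIdeal
  have hmem : ∀ i, ∀ v ∉ F, var k K v ∈ (l i).asIdeal := fun i v hv => l.head_le i (hvar v hv)
  have hp' : ∀ v ∉ F, var k K v ∈ p := by
    intro v hv
    have := hmem (Fin.last _) v hv
    change var k K v ∈ l.last.asIdeal at this
    rwa [hlast] at this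
  refine ⟨F, hF, hp', ?_⟩
  let l' : LTSeries (PrimeSpectrum (MvPolynomial F k)) :=
    { length := l.length
      toFun := fun i => PrimeSpectrum.comap (ofFace k K F).toRingHom (l i)
      step := fun i => by
        refine lt_of_le_of_ne (Ideal.comap_mono (l.step i).le) fun h =>
          LT.lt.ne (show l i.castSucc < l i.succ from l.step i) ?_
        ext r
        rw [← ofFace_toFace_mem_iff hF.1 (hmem _) r, ← ofFace_toFace_mem_iff hF.1 (hmem _) r]
        exact SetLike.ext_iff.mp h (toFace k hF.1 r) }
  have h : (l'.length : ℕ∞) ≤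
      Order.height (PrimeSpectrum.comap (ofFace k K F).toRingHom ⟨p, hp⟩) := by
    refine Order.length_le_height (le_of_eq ?_)
    rw [← hlast]
    rfl
  rw [← PrimeSpectrum.height_eq_orderHeight] at h
  exact hlen ▸ h

lemma height_comap_ofFace_eq {p : Ideal (SRRing k K)} {F G : Finset V} (hcard : F.card = G.card)
    (hF : ∀ v ∉ F, var k K v ∈ p) (hG : ∀ v ∉ G, var k K v ∈ p) :
    (p.comap (ofFace k K F)).height = (p.comap (ofFace k K G)).height := by
  classical
  obtain ⟨e, he⟩ : ∃ e : F ≃ G, ∀ v : F, var k K v ∉ p → (e v : V) = v := by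
    obtain ⟨e, he⟩ := Finset.exists_equiv_extend_of_card_eq (α := F) (t := G) (by simpa using hcard)
      (s := Finset.univ.filter fun v => var k K v ∉ p) (f := Subtype.val) (by
        intro v hv
        obtain ⟨w, hw, rfl⟩ := Finset.mem_image.mp hv
        by_contra h
        exact (Finset.mem_filter.mp hw).2 (hG _ h)) Subtype.val_injective.injOn
    exact ⟨e, fun v hv => he v (by simpa using hv)⟩
  have hcongr : (Ideal.Quotient.mkₐ k p).comp (ofFace k K F) =
      ((Ideal.Quotient.mkₐ k p).comp (ofFace k K G)).comp (renameEquiv k e).toAlgHom := by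
    ext v
    by_cases hv : var k K v ∈ p
    · have hev : var k K (e v) ∈ p := by
        by_contra hev
        by_cases hevF : (e v : V) ∈ F
        · have h1 := he ⟨e v, hevF⟩ hev
          have h2 : (⟨e v, hevF⟩ : F) = v := e.injective (Subtype.ext h1)
          exact hev (by rwa [← congrArg Subtype.val h2] at hv)
        · exact hev (hF _ hevF)
      simp [ofFace_X, Ideal.Quotient.eq_zero_iff_mem.mpr hv, Ideal.Quotient.eq_zero_iff_mem.mpr hev]
    · simp [ofFace_X, he v hv]
  rw [← RingEquiv.height_comap (renameEquiv k e).toRingEquiv]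
  congr 1
  ext f
  have := DFunLike.congr_fun hcongr f
  change ofFace k K F f ∈ p ↔ ofFace k K G (renameEquiv k e f) ∈ p
  rw [← Ideal.Quotient.eq_zero_iff_mem, ← Ideal.Quotient.eq_zero_iff_mem]
  exact iff_of_eq (congrArg (· = 0) this)

/-- In a pure complex, passing to the star of `σ` does not lower the dimension at a prime. -/
lemma height_le_of_comap_closedStar (hpure : ∀ F G, K.IsFacet F → K.IsFacet G → F.card = G.card)
    (σ : Finset V) (q : Ideal (SRRing k (K.closedStar σ))) [q.IsPrime] :
    (q.comap (toSubcomplex k (K.closedStar_faces_subset σ))).height ≤ q.height := by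
  set p := q.comap (toSubcomplex k (K.closedStar_faces_subset σ)) with hp
  obtain ⟨F, hF, hvF, hle⟩ := exists_isFacet_height_le p
  obtain ⟨G, hG, hvG⟩ := exists_isFacet_var_mem q
  have hσG : σ ⊆ G := by
    have h1 : σ ∪ G ∈ (K.closedStar σ).faces := by
      rw [mem_closedStar_iff, ← Finset.union_assoc, Finset.union_self]
      exact mem_closedStar_iff.mp hG.1
    exact Finset.union_eq_right.mp (hG.2 _ h1 Finset.subset_union_right).symm
  have hGK : K.IsFacet G := by
    refine ⟨K.closedStar_faces_subset σ hG.1, fun H hH hGH => hG.2 H ?_ hGH⟩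
    rwa [mem_closedStar_iff, Finset.union_eq_right.mpr (hσG.trans hGH)]
  have hcomap : (q.comap (ofFace k (K.closedStar σ) G)).comap (toFace k hG.1) = q := by
    ext r
    exact ofFace_toFace_mem_iff hG.1 hvG r
  have hpq : p.comap (ofFace k K G) = q.comap (ofFace k (K.closedStar σ) G) := by
    ext f
    rw [Ideal.mem_comap, hp, Ideal.mem_comap, toSubcomplex_ofFace, Ideal.mem_comap]
  calc p.height ≤ (p.comap (ofFace k K F)).height := hle
    _ = (p.comap (ofFace k K G)).height :=
      height_comap_ofFace_eq (hpure _ _ hF hGK) hvF fun v hv => by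
        rw [hp, Ideal.mem_comap, toSubcomplex_var]
        exact hvG v hv
    _ = (q.comap (ofFace k (K.closedStar σ) G)).height := by
      rw [hpq]
    _ ≤ q.height := height_comap_le_height_of_surjective (toFace k hG.1).toRingHom
      (toFace_surjective hG.1) hcomap

end SComplex

end Height

/-! ### Serre's condition `(S_2)` implies purity -/

section Purity

open MvPolynomial

open scoped Pointwise in
/-- A local ring of depth at least two has connected punctured spectrum, in the following sense. -/
lemma eq_bot_or_eq_bot_of_hasRegularSeq_two {L : Type} [CommRing L] [IsLocalRing L]
    (h : HasRegularSeq L L 2) {I J : Ideal L} (hIJ : ∀ x ∈ I, ∀ y ∈ J, x * y = 0)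
    (hsup : IsLocalRing.maximalIdeal L ≤ I ⊔ J) : I = ⊥ ∨ J = ⊥ := by
  obtain ⟨rs, len, mem, reg⟩ := h
  obtain ⟨f, g, rfl⟩ := List.length_eq_two.mp len
  have hreg := reg.toIsWeaklyRegular
  rw [RingTheory.Sequence.isWeaklyRegular_cons_iff, RingTheory.Sequence.isWeaklyRegular_cons_iff]
    at hreg
  obtain ⟨hf, hg, -⟩ := hreg
  have hdvd : ∀ z, f ∣ g * z → f ∣ z := by
    intro z hz
    have hmem : ∀ y : L, y ∈ f • (⊤ : Submodule L L) ↔ f ∣ y := by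
      intro y
      simp [Submodule.mem_smul_pointwise_iff_exists, Dvd.dvd, eq_comm]
    rw [← hmem] at hz ⊢
    rw [← Submodule.Quotient.mk_eq_zero] at hz ⊢
    exact hg.right_eq_zero_of_smul hz
  obtain ⟨f₁, hf₁, f₂, hf₂, hff⟩ := Submodule.mem_sup.mp (hsup (mem f (by simp)))
  obtain ⟨g₁, hg₁, g₂, hg₂, hgg⟩ := Submodule.mem_sup.mp (hsup (mem g (by simp)))
  have hzero : ∀ x, f * x = 0 → x = 0 := fun x hx => hf.right_eq_zero_of_smul hx
  obtain ⟨c, hc⟩ := hdvd f₂ ⟨g₂, by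
    linear_combination (-f₂) * hgg + g₂ * hff + hIJ g₁ hg₁ f₂ hf₂ - hIJ f₁ hf₁ g₂ hg₂⟩
  rcases IsLocalRing.isUnit_or_isUnit_one_sub_self c with hu | hu
  · left
    have hfJ : f ∈ J := by
      rw [hc] at hf₂
      exact (Ideal.mul_unit_mem_iff_mem J hu).mp hf₂
    exact (Submodule.eq_bot_iff _).mpr fun x hx => hzero x (by rw [mul_comm]; exact hIJ x hx f hfJ)
  · right
    have hfI : f ∈ I := by
      have : f₁ = f * (1 - c) := by linear_combination hff - hc
      rw [this] at hf₁
      exact (Ideal.mul_unit_mem_iff_mem I hu).mp hf₁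
    exact (Submodule.eq_bot_iff _).mpr fun x hx => hzero x (hIJ f hfI x hx)

lemma SerreCondS.hasRegularSeq {ℓ n : ℕ} {R : Type} [CommRing R] [IsNoetherianRing R]
    (h : SerreCondS ℓ R) (p : Ideal R) [hp : p.IsPrime] (hn : n ≤ ℓ) (hnp : n ≤ p.height) :
    HasRegularSeq (Localization.AtPrime p) (Localization.AtPrime p) n := by
  have hdim := IsLocalization.AtPrime.ringKrullDim_eq_height p (Localization.AtPrime p)
  have h1 := h p hp
  rw [hdim] at h1
  rw [← le_depthIn_iff]
  have h2 : ((n : ℕ∞) : WithBot ℕ∞) ≤ min ((ℓ : ℕ∞) : WithBot ℕ∞) (p.height : WithBot ℕ∞) :=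
    le_min (by exact_mod_cast hn) (by exact_mod_cast hnp)
  exact_mod_cast h2.trans h1

namespace SComplex

variable {V : Type} {k : Type} [Field k] [DecidableEq V] {K : SComplex V}

/-- The prime ideal of a face, generated by the variables outside it. -/
noncomputable def facePrime (k : Type) [Field k] {K : SComplex V} {F : Finset V}
    (hF : F ∈ K.faces) : Ideal (SRRing k K) :=
  RingHom.ker (toFace k hF)

instance {F : Finset V} (hF : F ∈ K.faces) : (facePrime k hF).IsPrime :=
  RingHom.ker_isPrime _

lemma var_mem_facePrime_iff {F : Finset V} (hF : F ∈ K.faces) {v : V} :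
    var k K v ∈ facePrime k hF ↔ v ∉ F := by
  rw [facePrime, RingHom.mem_ker]
  by_cases hv : v ∈ F
  · simp [toFace_var_of_mem hF hv, hv]
  · simp [toFace_var_of_notMem hF hv, hv]

lemma facePrime_le_span {F : Finset V} (hF : F ∈ K.faces) :
    facePrime k hF ≤ Ideal.span (var k K '' {v | v ∉ F}) := by
  intro f hf
  obtain ⟨f, rfl⟩ := Ideal.Quotient.mk_surjective f
  have := Ideal.mem_map_of_mem (Ideal.Quotient.mk (srIdeal k K))
    (restrictVars_eq_zero_iff_mem.mp hf)
  rwa [Ideal.map_span, Set.image_image] at this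

lemma facePrime_anti {F G : Finset V} (hF : F ∈ K.faces) (hG : G ∈ K.faces) (h : F ⊆ G) :
    facePrime k hG ≤ facePrime k hF := by
  intro f hf
  obtain ⟨f, rfl⟩ := Ideal.Quotient.mk_surjective f
  exact restrictVars_eq_zero_of_subset h hf

lemma facePrime_strictAnti {F G : Finset V} (hF : F ∈ K.faces) (hG : G ∈ K.faces) (h : F ⊂ G) :
    facePrime k hG < facePrime k hF := by
  refine lt_of_le_of_ne (facePrime_anti hF hG h.subset) fun heq => ?_
  obtain ⟨v, hvG, hvF⟩ := Finset.exists_of_ssubset h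
  have := (var_mem_facePrime_iff (k := k) hF).mpr hvF
  rw [← heq, var_mem_facePrime_iff] at this
  exact this hvG

lemma two_le_height_facePrime {F G : Finset V} (hF : F ∈ K.faces) (hG : G ∈ K.faces) (h : F ⊆ G)
    (hcard : F.card + 2 ≤ G.card) : 2 ≤ (facePrime k hF).height := by
  obtain ⟨a, haG, haF⟩ := Finset.exists_of_ssubset
    (Finset.ssubset_iff_subset_ne.mpr ⟨h, fun h => by subst h; omega⟩)
  have hsub : insert a F ⊆ G := Finset.insert_subset haG h
  have hH : insert a F ∈ K.faces := K.down_closed hG hsub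
  have hlt : insert a F ⊂ G := by
    refine Finset.ssubset_iff_subset_ne.mpr ⟨hsub, fun h => ?_⟩
    rw [← h, Finset.card_insert_of_notMem haF] at hcard
    omega
  have h1 := Ideal.height_add_one_le_of_lt_of_isPrime
    (facePrime_strictAnti (k := k) hF hH (Finset.ssubset_insert haF))
  have h2 := Ideal.height_add_one_le_of_lt_of_isPrime (facePrime_strictAnti (k := k) hH hG hlt)
  calc (2 : ℕ∞) = 0 + 1 + 1 := by norm_num
    _ ≤ (facePrime k hG).height + 1 + 1 := by gcongr; exact zero_le
    _ ≤ (facePrime k hH).height + 1 := by gcongr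
    _ ≤ _ := h1

lemma algebraMap_faceMonomial_isUnit {F : Finset V} (hF : F ∈ K.faces) :
    IsUnit (algebraMap _ (Localization.AtPrime (facePrime k hF)) (faceMonomial k K F)) :=
  IsLocalization.map_units _ (⟨_, toFace_faceMonomial_ne_zero hF subset_rfl⟩ :
    (facePrime k hF).primeCompl)

lemma algebraMap_faceMonomial_eq_zero {F s : Finset V} (hF : F ∈ K.faces) (h : F ∪ s ∉ K.faces) :
    algebraMap _ (Localization.AtPrime (facePrime k hF)) (faceMonomial k K s) = 0 := by
  refine (algebraMap_faceMonomial_isUnit hF).mul_right_eq_zero.mp ?_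
  rw [← map_mul, faceMonomial_mul_eq_zero h, map_zero]

lemma algebraMap_var_ne_zero {F G : Finset V} (hF : F ∈ K.faces) (hG : G ∈ K.faces) (h : F ⊆ G)
    {v : V} (hv : v ∈ G) :
    algebraMap _ (Localization.AtPrime (facePrime k hF)) (var k K v) ≠ 0 := by
  intro h0
  obtain ⟨s, hs⟩ := (IsLocalization.map_eq_zero_iff (facePrime k hF).primeCompl _ _).mp h0
  have hvG : var k K v ∉ facePrime k hG := fun h => (var_mem_facePrime_iff hG).mp h hv
  have hprod : s.1 * var k K v ∈ facePrime k hG := hs ▸ zero_mem _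
  exact s.2 (facePrime_anti hF hG h
    (((inferInstance : (facePrime k hG).IsPrime).mem_or_mem hprod).resolve_right hvG))

/-- A complex satisfying `(S_2)` is pure. -/
lemma card_eq_of_serreS {ℓ : ℕ} (hl : 2 ≤ ℓ) (hserre : SerreS k ℓ K) (F G : Finset V)
    (hF : K.IsFacet F) (hG : K.IsFacet G) : F.card = G.card := by
  classical
  by_contra hne
  let bad : Finset (Finset V) := K.faces.filter fun τ =>
    ∃ F G, K.IsFacet F ∧ K.IsFacet G ∧ τ ⊆ F ∧ τ ⊆ G ∧ F.card ≠ G.card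
  have hbad : ∅ ∈ bad := Finset.mem_filter.mpr ⟨K.down_closed hF.1 (Finset.empty_subset _),
    F, G, hF, hG, Finset.empty_subset _, Finset.empty_subset _, hne⟩
  obtain ⟨τ, -, hτ⟩ := bad.exists_le_maximal hbad
  obtain ⟨hτK, F, G, hF, hG, hτF, hτG, hne⟩ := Finset.mem_filter.mp hτ.prop
  have hinter : ∀ F G, K.IsFacet F → K.IsFacet G → τ ⊆ F → τ ⊆ G → F.card ≠ G.card →
      ∀ v ∈ F, v ∈ G → v ∈ τ := by
    intro F G hF hG hτF hτG hne v hvF hvG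
    refine hτ.le_of_ge (Finset.mem_filter.mpr ⟨K.down_closed hF.1 Finset.inter_subset_left, F, G,
      hF, hG, Finset.inter_subset_left, Finset.inter_subset_right, hne⟩)
      (Finset.subset_inter hτF hτG) (Finset.mem_inter.mpr ⟨hvF, hvG⟩)
  have hexists : ∀ F G, K.IsFacet F → K.IsFacet G → τ ⊆ F → τ ⊆ G → F.card ≠ G.card →
      τ ⊂ F := by
    intro F G hF hG hτF hτG hne
    refine Finset.ssubset_iff_subset_ne.mpr ⟨hτF, ?_⟩
    rintro rfl
    exact hne (congrArg Finset.card (hF.2 G hG.1 hτG))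
  have hssF := hexists F G hF hG hτF hτG hne
  have hssG := hexists G F hG hF hτG hτF hne.symm
  have hheight : 2 ≤ (facePrime k hτK).height := by
    have h1 := Finset.card_lt_card hssF
    have h2 := Finset.card_lt_card hssG
    rcases lt_or_gt_of_ne hne with h | h
    · exact two_le_height_facePrime hτK hG.1 hτG (by omega)
    · exact two_le_height_facePrime hτK hF.1 hτF (by omega)
  let U : V → Prop := fun v => ∃ H, K.IsFacet H ∧ τ ⊆ H ∧ H.card = F.card ∧ v ∈ H
  let a : V → Localization.AtPrime (facePrime k hτK) := fun v => algebraMap _ _ (var k K v)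
  have hmul : ∀ u w, u ∉ τ → U u → ¬ U w → a u * a w = 0 := by
    rintro u w hu ⟨H, hH, hτH, hcard, huH⟩ hw
    have hnot : τ ∪ {u, w} ∉ K.faces := by
      intro h
      obtain ⟨H', hH', hsub⟩ := IsFacet.exists_superset h
      have hτH' : τ ⊆ H' := Finset.subset_union_left.trans hsub
      have huH' : u ∈ H' := hsub (by simp)
      have hwH' : w ∈ H' := hsub (by simp)
      by_cases hc : H'.card = F.card
      · exact hw ⟨H', hH', hτH', hc, hwH'⟩
      · exact hu (hinter H H' hH hH' hτH hτH' (by omega) u huH huH')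
    have huw : u ≠ w := by
      rintro rfl
      exact hw ⟨H, hH, hτH, hcard, huH⟩
    have := algebraMap_faceMonomial_eq_zero (k := k) hτK hnot
    rwa [faceMonomial_eq_prod, Finset.prod_pair huw, map_mul] at this
  have hreg := SerreCondS.hasRegularSeq (n := 2) hserre (facePrime k hτK) hl hheight
  have hsplit := eq_bot_or_eq_bot_of_hasRegularSeq_two hreg
    (I := Ideal.span (a '' {v | v ∉ τ ∧ U v})) (J := Ideal.span (a '' {v | v ∉ τ ∧ ¬ U v})) ?_ ?_
  · rcases hsplit with h | h
    · obtain ⟨v, hvF, hvτ⟩ := Finset.exists_of_ssubset hssF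
      refine algebraMap_var_ne_zero (k := k) hτK hF.1 hτF hvF ((Submodule.eq_bot_iff _).mp h _ ?_)
      exact Ideal.subset_span ⟨v, ⟨hvτ, F, hF, hτF, rfl, hvF⟩, rfl⟩
    · obtain ⟨v, hvG, hvτ⟩ := Finset.exists_of_ssubset hssG
      refine algebraMap_var_ne_zero (k := k) hτK hG.1 hτG hvG ((Submodule.eq_bot_iff _).mp h _ ?_)
      refine Ideal.subset_span ⟨v, ⟨hvτ, ?_⟩, rfl⟩
      rintro ⟨H, hH, hτH, hcard, hvH⟩
      exact hvτ (hinter H G hH hG hτH hτG (by omega) v hvH hvG)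
  · have hle : Ideal.span (a '' {v | v ∉ τ ∧ U v}) * Ideal.span (a '' {v | v ∉ τ ∧ ¬ U v}) ≤ ⊥ := by
      rw [Ideal.span_mul_span', Ideal.span_le]
      rintro _ ⟨_, ⟨u, hu, rfl⟩, _, ⟨w, hw, rfl⟩, rfl⟩
      exact hmul u w hu.1 hu.2 hw.2
    exact fun x hx y hy => hle (Ideal.mul_mem_mul hx hy)
  · rw [← IsLocalization.AtPrime.map_eq_maximalIdeal (facePrime k hτK), Ideal.map_le_iff_le_comap]
    refine (facePrime_le_span hτK).trans ?_
    rw [Ideal.span_le]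
    rintro _ ⟨v, hv, rfl⟩
    by_cases hU : U v
    · exact Ideal.mem_sup_left (Ideal.subset_span ⟨v, ⟨hv, hU⟩, rfl⟩)
    · exact Ideal.mem_sup_right (Ideal.subset_span ⟨v, ⟨hv, hU⟩, rfl⟩)

end SComplex

end Purity

/-! ### Localizations of quotients and of stars -/

section LocalizedQuotient

variable {R T : Type} [CommRing R] [CommRing T] (f : R →+* T) (P : Ideal R) [P.IsPrime]
  (Q : Ideal T) [Q.IsPrime]

lemma map_primeCompl_of_surjective (h : P = Q.comap f) (hf : Function.Surjective f) :
    Submonoid.map f P.primeCompl = Q.primeCompl := by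
  subst h
  exact Submonoid.map_comap_eq_of_surjective hf Q.primeCompl

lemma localRingHom_surjective_of_surjective (h : P = Q.comap f) (hf : Function.Surjective f) :
    Function.Surjective (Localization.localRingHom P Q f h) := by
  subst h
  exact RingHom.surjective_localRingHom_of_surjective f hf Q

lemma ker_localRingHom_of_surjective (h : P = Q.comap f) (hf : Function.Surjective f) :
    RingHom.ker (Localization.localRingHom P Q f h) =
      (RingHom.ker f).map (algebraMap R (Localization.AtPrime P)) :=
  IsLocalization.ker_map (S := Localization.AtPrime P) (Localization.AtPrime Q) f
    (map_primeCompl_of_surjective f P Q h hf)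

lemma localRingHom_eq_zero_iff_of_annihilator (h : P = Q.comap f) (hf : Function.Surjective f)
    {x : R} (hx : ∀ r, f r = 0 ↔ x * r = 0) (z : Localization.AtPrime P) :
    Localization.localRingHom P Q f h z = 0 ↔ algebraMap R (Localization.AtPrime P) x * z = 0 := by
  rw [← RingHom.mem_ker, ker_localRingHom_of_surjective f P Q h hf]
  constructor
  · intro hz
    induction hz using Submodule.span_induction with
    | mem _ hy =>
      obtain ⟨r, hr, rfl⟩ := hy
      rw [← map_mul, (hx r).mp hr, map_zero]
    | zero => exact mul_zero _
    | add _ _ _ _ h₁ h₂ => rw [mul_add, h₁, h₂, add_zero]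
    | smul c _ _ h₁ => rw [smul_eq_mul, mul_left_comm, h₁, mul_zero]
  · intro hz
    obtain ⟨⟨r, s⟩, hrs⟩ := IsLocalization.surj P.primeCompl z
    have h1 : algebraMap R (Localization.AtPrime P) (x * r) = 0 := by
      rw [map_mul, ← hrs, ← mul_assoc, hz, zero_mul]
    obtain ⟨u, hu⟩ := (IsLocalization.map_eq_zero_iff P.primeCompl _ _).mp h1
    have h2 : (u * r : R) ∈ RingHom.ker f := (hx _).mpr (by rw [← hu]; ring)
    have h3 := Ideal.mem_map_of_mem (algebraMap R (Localization.AtPrime P)) h2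
    rw [map_mul, ← hrs] at h3
    rwa [Ideal.unit_mul_mem_iff_mem _ (IsLocalization.map_units _ u),
      Ideal.mul_unit_mem_iff_mem _ (IsLocalization.map_units _ s)] at h3

lemma localRingHom_bijective_of_annihilator (h : P = Q.comap f) (hf : Function.Surjective f)
    {x : R} (hx : ∀ r, f r = 0 ↔ x * r = 0) (hxP : x ∉ P) :
    Function.Bijective (Localization.localRingHom P Q f h) := by
  refine ⟨(injective_iff_map_eq_zero _).mpr fun z hz => ?_,
    localRingHom_surjective_of_surjective f P Q h hf⟩
  have hunit : IsUnit (algebraMap R (Localization.AtPrime P) x) :=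
    IsLocalization.map_units _ (⟨x, hxP⟩ : P.primeCompl)
  exact hunit.mul_right_eq_zero.mp
    ((localRingHom_eq_zero_iff_of_annihilator f P Q h hf hx z).mp hz)

end LocalizedQuotient

lemma extVanishBelow_span_singleton {L T : Type} [CommRing L] [IsLocalRing L] [IsNoetherianRing L]
    [CommRing T] [IsLocalRing T] (f : L →+* T) (hf : Function.Surjective f) {a : L}
    (ha : ∀ z, f z = 0 ↔ a * z = 0) {n : ℕ} (hn : HasRegularSeq T T n) :
    ExtVanishBelow L (Ideal.span {a}) n := by
  let := f.toAlgebra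
  have : Module.Finite L T := Module.Finite.of_surjective (Algebra.linearMap L T) hf
  have hT : ExtVanishBelow L T n := ((hasRegularSeq_quotient_iff hf).mpr hn).extVanishBelow
  have hker : LinearMap.ker (Algebra.linearMap L T) =
      LinearMap.ker (LinearMap.toSpanSingleton L L a) := by
    ext z
    rw [LinearMap.mem_ker, LinearMap.mem_ker, Algebra.linearMap_apply,
      LinearMap.toSpanSingleton_apply, smul_eq_mul, mul_comm]
    exact ha z
  have hrange : LinearMap.range (LinearMap.toSpanSingleton L L a) = Ideal.span {a} :=
    LinearMap.range_toSpanSingleton a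
  exact hT.congr ((((Algebra.linearMap L T).quotKerEquivOfSurjective hf).symm.trans
    (Submodule.quotEquivOfEq _ _ hker)).trans
    ((LinearMap.toSpanSingleton L L a).quotKerEquivRange.trans (LinearEquiv.ofEq _ _ hrange)))

lemma extVanishBelow_span_image {L ι : Type} [CommRing L] [IsLocalRing L] [IsReduced L]
    {a : ι → L} {s : Finset ι} {n : ℕ} (hmul : ∀ i ∈ s, ∀ j ∈ s, i ≠ j → a i * a j = 0)
    (hs : ∀ i ∈ s, ExtVanishBelow L (Ideal.span {a i}) n) :
    ExtVanishBelow L (Ideal.span (a '' (s : Set ι))) n := by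
  classical
  induction s using Finset.induction with
  | empty =>
    have : Subsingleton (Ideal.span (a '' ((∅ : Finset ι) : Set ι))) := by
      rw [Finset.coe_empty, Set.image_empty, Ideal.span_empty]
      infer_instance
    exact extVanishBelow_of_subsingleton n
  | insert i s hi ih =>
    have hJ := ih (fun i hi j hj => hmul i (Finset.mem_insert_of_mem hi) j
      (Finset.mem_insert_of_mem hj)) fun i hi => hs i (Finset.mem_insert_of_mem hi)
    have hI := hs i (Finset.mem_insert_self i s)
    set I := Ideal.span {a i}
    set J := Ideal.span (a '' (s : Set ι))
    have hIJ : I * J ≤ ⊥ := by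
      rw [Ideal.span_mul_span', Ideal.span_le]
      rintro _ ⟨_, rfl, _, ⟨j, hj, rfl⟩, rfl⟩
      exact hmul i (Finset.mem_insert_self i s) j (Finset.mem_insert_of_mem hj)
        (fun h => hi (h ▸ hj))
    have hdisj : Disjoint I J := by
      rw [Submodule.disjoint_def]
      intro z hzI hzJ
      have h2 : z * z = 0 := hIJ (Ideal.mul_mem_mul hzI hzJ)
      exact IsReduced.eq_zero z ⟨2, by rw [sq]; exact h2⟩
    have hprod : ExtVanishBelow L (I × J) n :=
      ExtVanishBelow.middle (f := LinearMap.inl L I J) (g := LinearMap.snd L I J)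
        Function.Exact.inl_snd LinearMap.inl_injective LinearMap.snd_surjective hI hJ
    have hinj : Function.Injective (I.subtype.coprod J.subtype) := by
      rw [← LinearMap.ker_eq_bot, LinearMap.ker_coprod_of_disjoint_range]
      · simp
      · simpa using hdisj
    have hrange : LinearMap.range (I.subtype.coprod J.subtype) =
        Ideal.span (a '' ((insert i s : Finset ι) : Set ι)) := by
      rw [LinearMap.range_coprod, Submodule.range_subtype, Submodule.range_subtype,
        Finset.coe_insert, Set.image_insert_eq, Ideal.span_insert]
    exact hprod.congr ((LinearEquiv.ofInjective _ hinj).trans (LinearEquiv.ofEq _ _ hrange))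

/-- If `R ⧸ (0 : x)` has depth at least `n` at every prime lying over `P`, then the `Ext` modules
of the ideal `x R_P` vanish below `n`. -/
lemma extVanishBelow_span_algebraMap {R T : Type} [CommRing R] [IsNoetherianRing R] [CommRing T]
    (f : R →+* T) (hf : Function.Surjective f) {x : R} (hx : ∀ r, f r = 0 ↔ x * r = 0)
    (P : Ideal R) [P.IsPrime] {n : ℕ}
    (hn : ∀ (Q : Ideal T) [Q.IsPrime], P = Q.comap f →
      HasRegularSeq (Localization.AtPrime Q) (Localization.AtPrime Q) n) :
    ExtVanishBelow (Localization.AtPrime P)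
      (Ideal.span {algebraMap R (Localization.AtPrime P) x}) n := by
  have : IsNoetherianRing (Localization.AtPrime P) :=
    IsLocalization.isNoetherianRing P.primeCompl _ inferInstance
  by_cases hker : RingHom.ker f ≤ P
  · have hQ : (P.map f).IsPrime := Ideal.map_isPrime_of_surjective hf hker
    have hcomap : P = (P.map f).comap f := by
      rw [Ideal.comap_map_of_surjective' _ hf, sup_eq_left.mpr hker]
    exact extVanishBelow_span_singleton (Localization.localRingHom P (P.map f) f hcomap)
      (localRingHom_surjective_of_surjective f P _ hcomap hf)
      (localRingHom_eq_zero_iff_of_annihilator f P _ hcomap hf hx) (hn _ hcomap)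
  · obtain ⟨r, hr, hrP⟩ := SetLike.not_le_iff_exists.mp hker
    have h0 : algebraMap R (Localization.AtPrime P) x = 0 := by
      refine (IsLocalization.map_eq_zero_iff P.primeCompl _ _).mpr ⟨⟨r, hrP⟩, ?_⟩
      rw [mul_comm]
      exact (hx r).mp hr
    have : Subsingleton (Ideal.span {algebraMap R (Localization.AtPrime P) x}) := by
      rw [h0, Ideal.span_singleton_eq_bot.mpr rfl]
      infer_instance
    exact extVanishBelow_of_subsingleton n

namespace SComplex

open MvPolynomial

variable {V : Type} {k : Type} [Field k] [DecidableEq V] {K : SComplex V}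

/-- The substitution `x_v ↦ 1 - x_v` for `v ∈ C`, on the polynomial ring. -/
noncomputable def reflectVars (k : Type) [Field k] (C : Finset V) :
    MvPolynomial V k →ₐ[k] MvPolynomial V k :=
  aeval fun v => if v ∈ C then 1 - X v else X v

lemma reflectVars_mem_srIdeal {σ C : Finset V} (hC : C ⊆ σ) {f : MvPolynomial V k}
    (hf : f ∈ srIdeal k (K.closedStar σ)) : reflectVars k C f ∈ srIdeal k (K.closedStar σ) := by
  have hle : srIdeal k (K.closedStar σ) ≤ (srIdeal k (K.closedStar σ)).comap (reflectVars k C) := by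
    rw [srIdeal, Ideal.span_le]
    rintro _ ⟨s, hs, rfl⟩
    have hs' : s \ σ ∉ (K.closedStar σ).faces := by
      rw [mem_closedStar_iff, Finset.union_sdiff_self_eq_union, ← mem_closedStar_iff]
      exact hs
    change reflectVars k C (∏ v ∈ s, X v) ∈ srIdeal k (K.closedStar σ)
    rw [map_prod, ← Finset.prod_sdiff (Finset.inter_subset_left (s₁ := s) (s₂ := σ)),
      Finset.sdiff_inter_self_left]
    refine Ideal.mul_mem_right _ _ ?_
    have : ∏ v ∈ s \ σ, reflectVars k C (X v) = ∏ v ∈ s \ σ, X v := by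
      refine Finset.prod_congr rfl fun v hv => ?_
      have hvC : v ∉ C := fun h => (Finset.mem_sdiff.mp hv).2 (hC h)
      simp [reflectVars, hvC]
    rw [this]
    exact prod_X_mem_srIdeal hs'
  exact hle hf

/-- The substitution `x_v ↦ 1 - x_v` for `v ∈ C ⊆ σ`, on the Stanley–Reisner ring of the star
of `σ`. -/
noncomputable def reflectHom (k : Type) [Field k] (K : SComplex V) {σ C : Finset V} (hC : C ⊆ σ) :
    SRRing k (K.closedStar σ) →ₐ[k] SRRing k (K.closedStar σ) :=
  Ideal.Quotient.liftₐ _ ((Ideal.Quotient.mkₐ k _).comp (reflectVars k C)) fun _ hf =>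
    Ideal.Quotient.eq_zero_iff_mem.mpr (reflectVars_mem_srIdeal hC hf)

lemma reflectHom_var {σ C : Finset V} (hC : C ⊆ σ) (v : V) :
    reflectHom k K hC (var k _ v) = if v ∈ C then 1 - var k _ v else var k _ v := by
  change Ideal.Quotient.mk _ (reflectVars k C (X v)) = _
  rw [reflectVars, aeval_X]
  split_ifs <;> simp [var]

lemma reflectHom_comp_self {σ C : Finset V} (hC : C ⊆ σ) :
    (reflectHom k K hC).comp (reflectHom k K hC) = AlgHom.id k _ := by
  apply algHom_ext
  intro v
  by_cases hv : v ∈ C <;> simp [reflectHom_var, hv]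

/-- `reflectHom` as an automorphism. -/
noncomputable def reflectEquiv (k : Type) [Field k] (K : SComplex V) {σ C : Finset V}
    (hC : C ⊆ σ) : SRRing k (K.closedStar σ) ≃+* SRRing k (K.closedStar σ) :=
  (AlgEquiv.ofAlgHom _ _ (reflectHom_comp_self hC) (reflectHom_comp_self hC)).toRingEquiv

lemma reflectEquiv_var {σ C : Finset V} (hC : C ⊆ σ) (v : V) :
    reflectEquiv k K hC (var k _ v) = if v ∈ C then 1 - var k _ v else var k _ v :=
  reflectHom_var hC v

/-- Localizations of the star of `σ` inherit depth from localizations of the whole complex. -/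
lemma hasRegularSeq_closedStar {ℓ n : ℕ} (hserre : SerreS k ℓ K) (σ : Finset V)
    (Q : Ideal (SRRing k (K.closedStar σ))) [hQ : Q.IsPrime] (hn : n ≤ ℓ) (hnQ : n ≤ Q.height) :
    HasRegularSeq (Localization.AtPrime Q) (Localization.AtPrime Q) n := by
  classical
  have hC : (σ.filter fun v => var k _ v ∈ Q) ⊆ σ := Finset.filter_subset _ _
  set e := reflectEquiv k K hC
  set Q' := Q.comap e with hQ'
  have hvar : ∀ v ∈ σ, var k _ v ∉ Q' := by
    intro v hv hmem
    rw [hQ', Ideal.mem_comap, reflectEquiv_var] at hmem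
    split_ifs at hmem with h
    · refine hQ.ne_top ((Ideal.eq_top_iff_one _).mpr ?_)
      simpa using add_mem hmem (Finset.mem_filter.mp h).2
    · exact h (Finset.mem_filter.mpr ⟨hv, hmem⟩)
  set g := toSubcomplex k (K.closedStar_faces_subset σ)
  set P := Q'.comap g with hP
  have hg : Function.Surjective g := toSubcomplex_surjective _
  have hheight : (n : ℕ∞) ≤ P.height := by
    refine hnQ.trans ?_
    rw [← RingEquiv.height_comap e]
    exact height_comap_le_height_of_surjective g hg rfl
  have hσ : faceMonomial k K σ ∉ P := by
    intro hmem
    rw [faceMonomial_eq_prod, hP, Ideal.mem_comap, map_prod] at hmem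
    obtain ⟨v, hv, hvQ⟩ := (inferInstance : Q'.IsPrime).prod_mem_iff.mp hmem
    exact hvar v hv hvQ
  have hbij := localRingHom_bijective_of_annihilator g P Q' hP hg
    (fun _ => toSubcomplex_closedStar_eq_zero_iff) hσ
  have h1 := SerreCondS.hasRegularSeq hserre P hn hheight
  exact (h1.of_ringEquiv (RingEquiv.ofBijective _ hbij)).of_ringEquiv
    (Localization.localRingEquiv Q' Q e hQ')

end SComplex

lemma serreCondS_of_hasRegularSeq {ℓ : ℕ} {R : Type} [CommRing R] [IsNoetherianRing R]
    (h : ∀ (p : Ideal R) [p.IsPrime] (n : ℕ), n ≤ ℓ → n ≤ p.height →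
      HasRegularSeq (Localization.AtPrime p) (Localization.AtPrime p) n) : SerreCondS ℓ R := by
  intro p hp
  have : IsNoetherianRing (Localization.AtPrime p) :=
    IsLocalization.isNoetherianRing p.primeCompl _ inferInstance
  obtain ⟨d, hd⟩ := ENat.ne_top_iff_exists.mp (Ideal.height_ne_top_of_isPrime (I := p))
  have h1 := le_depthIn_iff.mpr
    (h p (min ℓ d) (min_le_left _ _) (hd ▸ by exact_mod_cast min_le_right _ _))
  rw [IsLocalization.AtPrime.ringKrullDim_eq_height p (Localization.AtPrime p), ← hd]
  rcases le_total ℓ d with hle | hle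
  · exact (min_le_left _ _).trans (by rw [min_eq_left hle] at h1; exact_mod_cast h1)
  · exact (min_le_right _ _).trans (by rw [min_eq_right hle] at h1; exact_mod_cast h1)

lemma height_add_one_le_height_comap {R T : Type} [CommRing R] [CommRing T] (f : R →+* T)
    (hf : Function.Surjective f) {r : R} (hr : r ∈ nonZeroDivisors R) (hfr : f r = 0)
    (P : Ideal R) [P.IsPrime] (Q : Ideal T) [Q.IsPrime] (h : P = Q.comap f) :
    Q.height + 1 ≤ P.height := by
  have hr' : algebraMap R (Localization.AtPrime P) r ∈ nonZeroDivisors (Localization.AtPrime P) :=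
    IsLocalization.map_nonZeroDivisors_le P.primeCompl _ (Submonoid.mem_map_of_mem _ hr)
  have hdim := ringKrullDim_succ_le_of_surjective (Localization.localRingHom P Q f h)
    (localRingHom_surjective_of_surjective f P Q h hf) hr'
    (by rw [Localization.localRingHom_to_map, hfr, map_zero])
  rw [IsLocalization.AtPrime.ringKrullDim_eq_height P (Localization.AtPrime P),
    IsLocalization.AtPrime.ringKrullDim_eq_height Q (Localization.AtPrime Q)] at hdim
  exact_mod_cast hdim

/-- Passing to the quotient by an ideal whose `Ext` modules vanish one step further. -/
lemma HasRegularSeq.of_surjective_of_ker {L T : Type} [CommRing L] [IsLocalRing L]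
    [IsNoetherianRing L] [CommRing T] [IsLocalRing T] (f : L →+* T) (hf : Function.Surjective f)
    {J : Ideal L} (hJ : RingHom.ker f = J) {n : ℕ} (hn : ExtVanishBelow L J (n + 1))
    (hL : HasRegularSeq L L n) : HasRegularSeq T T n := by
  let := f.toAlgebra
  have : Module.Finite L T := Module.Finite.of_surjective (Algebra.linearMap L T) hf
  have hexact : Function.Exact J.subtype (Algebra.linearMap L T) := by
    intro z
    rw [← hJ]
    simp [RingHom.mem_ker, RingHom.algebraMap_toAlgebra]
  exact (hasRegularSeq_quotient_iff hf).mp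
    (hn.right hexact J.subtype_injective hf hL.extVanishBelow).hasRegularSeq

lemma hasRegularSeq_of_ker_eq_span_image {R T ι : Type} [CommRing R] [IsNoetherianRing R]
    [IsReduced R] [CommRing T] (f : R →+* T) (hf : Function.Surjective f) {a : ι → R}
    {s : Finset ι} (hker : RingHom.ker f = Ideal.span (a '' (s : Set ι)))
    (hmul : ∀ i ∈ s, ∀ j ∈ s, i ≠ j → a i * a j = 0)
    (P : Ideal R) [P.IsPrime] (Q : Ideal T) [Q.IsPrime] (h : P = Q.comap f) {n : ℕ}
    (hs : ∀ i ∈ s, ExtVanishBelow (Localization.AtPrime P)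
      (Ideal.span {algebraMap R (Localization.AtPrime P) (a i)}) (n + 1))
    (hP : HasRegularSeq (Localization.AtPrime P) (Localization.AtPrime P) n) :
    HasRegularSeq (Localization.AtPrime Q) (Localization.AtPrime Q) n := by
  have : IsNoetherianRing (Localization.AtPrime P) :=
    IsLocalization.isNoetherianRing P.primeCompl _ inferInstance
  have : IsReduced (Localization.AtPrime P) :=
    isReduced_localizationPreserves P.primeCompl _ inferInstance
  refine hP.of_surjective_of_ker (Localization.localRingHom P Q f h)
    (localRingHom_surjective_of_surjective f P Q h hf) ?_ (extVanishBelow_span_image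
      (a := fun i => algebraMap R (Localization.AtPrime P) (a i)) (s := s) ?_ hs)
  · rw [ker_localRingHom_of_surjective f P Q h hf, hker, Ideal.map_span, ← Set.image_comp]
    rfl
  · intro i hi j hj hij
    rw [← map_mul, hmul i hi j hj hij, map_zero]

/-- If `A ⊆ Δ` is an excellent set of faces (independent, and every facet
contains a member of `A`) and `Δ` satisfies `(S_ℓ)` with `ℓ ≥ 2`, then `Δ_A` satisfies
`(S_{ℓ-1})`. -/
theorem deleteAbove_serre {V : Type} [DecidableEq V] (k : Type) [Field k] (K : SComplex V)
    (A : Finset (Finset V)) (hA : ∀ σ ∈ A, σ ∈ K.faces)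
    (hindep : ∀ σ ∈ A, ∀ τ ∈ A, σ ≠ τ → σ ∪ τ ∉ K.faces)
    (hexc : ∀ F : Finset V, K.IsFacet F → ∃ σ ∈ A, σ ⊆ F)
    (ℓ : ℕ) (hl : 2 ≤ ℓ) (hserre : SComplex.SerreS k ℓ K) :
    SComplex.SerreS k (ℓ - 1) (K.deleteAbove A) := by
  set g := SComplex.toSubcomplex k (K.deleteAbove_faces_subset A)
  have hg : Function.Surjective g := SComplex.toSubcomplex_surjective _
  have hker : RingHom.ker g = _ := SComplex.ker_toSubcomplex_deleteAbove A
  refine serreCondS_of_hasRegularSeq fun Q _ n hn hnQ => ?_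
  have hsum : g (∑ σ ∈ A, SComplex.faceMonomial k K σ) = 0 := by
    rw [← RingHom.mem_ker, hker]
    exact sum_mem fun σ hσ => Ideal.subset_span ⟨σ, hσ, rfl⟩
  have hheight := height_add_one_le_height_comap g hg
    (SComplex.sum_faceMonomial_mem_nonZeroDivisors hindep hexc) hsum (Q.comap g) Q rfl
  have hnP : ((n + 1 : ℕ) : ℕ∞) ≤ (Q.comap g).height := by
    push_cast
    exact (add_le_add_left hnQ 1).trans hheight
  have hnl : n + 1 ≤ ℓ := by omega
  refine hasRegularSeq_of_ker_eq_span_image g hg hker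
    (fun σ hσ τ hτ hne => SComplex.faceMonomial_mul_eq_zero (hindep σ hσ τ hτ hne))
    (Q.comap g) Q rfl (fun σ _ => ?_)
    (SerreCondS.hasRegularSeq hserre _ (by omega) (le_trans (by exact_mod_cast n.le_succ) hnP))
  refine extVanishBelow_span_algebraMap (SComplex.toSubcomplex k (K.closedStar_faces_subset σ))
    (SComplex.toSubcomplex_surjective _)
    (fun _ => SComplex.toSubcomplex_closedStar_eq_zero_iff) _ fun Q' _ hQ' => ?_
  refine SComplex.hasRegularSeq_closedStar hserre σ Q' hnl (hnP.trans ?_)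
  rw [hQ']
  exact SComplex.height_le_of_comap_closedStar (SComplex.card_eq_of_serreS hl hserre) σ Q'
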